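/- There is an absolute constant c₀ such that for all n, k ∈ ℕ there exists a bounded linear operator T : ℓ_∞^{m} → ℓ_2^n with m = ⌊n^{1 + ln k}⌋ and π_1(T) > 0 satisfying π_1^k(T) ≤ c₀ · √((1 + ln k)/n) · π_1(T). -/

import Mathlib

open scoped ENNReal NNReal BigOperators

noncomputable section

/-- The `ℓ_p`-sum `(∑ i, f i ^ p) ^ (1/p)` of a finite family in `ℝ≥0∞`,
with the usual sup-modification for `p = ∞`. -/
def eSum (p : ℝ≥0∞) {ι : Type*} [Fintype ι] (f : ι → ℝ≥0∞) : ℝ≥0∞ :=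
  if p = ∞ then ⨆ i, f i else (∑ i, f i ^ p.toReal) ^ (1 / p.toReal)

/-- The weak `ℓ_q`-norm of a finite family of vectors:
`sup { (∑ k |⟨x_k, x*⟩|^q)^(1/q) : x* in the unit ball of the dual }`. -/
def weakLq (q : ℝ≥0∞) {X : Type*} [NormedAddCommGroup X] [NormedSpace ℝ X]
    {n : ℕ} (x : Fin n → X) : ℝ≥0∞ :=
  ⨆ f : {f : X →L[ℝ] ℝ // ‖f‖ ≤ 1}, eSum q fun k => ENNReal.ofReal |f.1 (x k)|

/-- The `(p,q)`-summing norm of `T` with respect to `n` vectors. -/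
def piN (p q : ℝ≥0∞) {X Y : Type*} [NormedAddCommGroup X] [NormedSpace ℝ X]
    [NormedAddCommGroup Y] [NormedSpace ℝ Y] (n : ℕ) (T : X →L[ℝ] Y) : ℝ≥0∞ :=
  ⨆ x : {x : Fin n → X // weakLq q x ≤ 1}, eSum p fun k => ENNReal.ofReal ‖T (x.1 k)‖

/-- The `(p,q)`-summing norm of `T`. -/
def piPQ (p q : ℝ≥0∞) {X Y : Type*} [NormedAddCommGroup X] [NormedSpace ℝ X]
    [NormedAddCommGroup Y] [NormedSpace ℝ Y] (T : X →L[ℝ] Y) : ℝ≥0∞ :=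
  ⨆ n : ℕ, piN p q n T

/-- `T` has rank at most `n`: its range is a finite-dimensional subspace of
dimension at most `n`. -/
def RankLE {X Y : Type*} [NormedAddCommGroup X] [NormedSpace ℝ X]
    [NormedAddCommGroup Y] [NormedSpace ℝ Y] (T : X →L[ℝ] Y) (n : ℕ) : Prop :=
  FiniteDimensional ℝ (LinearMap.range (T : X →ₗ[ℝ] Y)) ∧
    Module.finrank ℝ (LinearMap.range (T : X →ₗ[ℝ] Y)) ≤ n

/-- The average of `‖∑ k, ε k • x k‖²` over all `2^n` sign choices `ε ∈ {-1,1}^n`. -/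
def radAvg {X : Type*} [NormedAddCommGroup X] [NormedSpace ℝ X] {n : ℕ}
    (x : Fin n → X) : ℝ :=
  (∑ ε : Fin n → Bool, ‖∑ k, (if ε k then (1 : ℝ) else -1) • x k‖ ^ 2) / 2 ^ n

/-- The Rademacher cotype `q` constant of `T` with respect to `n` vectors. -/
def cotypeN (q : ℝ) {X Y : Type*} [NormedAddCommGroup X] [NormedSpace ℝ X]
    [NormedAddCommGroup Y] [NormedSpace ℝ Y] (n : ℕ) (T : X →L[ℝ] Y) : ℝ≥0∞ :=
  ⨆ x : {x : Fin n → X // Real.sqrt (radAvg x) ≤ 1},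
    (∑ k, ENNReal.ofReal ‖T (x.1 k)‖ ^ q) ^ (1 / q)

/-- The Rademacher cotype `q` constant of `T`. -/
def cotype (q : ℝ) {X Y : Type*} [NormedAddCommGroup X] [NormedSpace ℝ X]
    [NormedAddCommGroup Y] [NormedSpace ℝ Y] (T : X →L[ℝ] Y) : ℝ≥0∞ :=
  ⨆ n : ℕ, cotypeN q n T

/-! Fix a probability measure with masses `w_i` at unit vectors `v_i` of `ℓ_2^n`, and let
`T x = ∑ i, w_i x_i v_i`. The images of the unit vectors of `ℓ_∞^m` show that
`π_1(T) ≥ ∑ i, ‖T e_i‖ = 1`. If `x_1, …, x_k` are admissible in the definition of `π_1^k` and `f_j`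
norms `T x_j`, then `∑ j, |x_j(i)| ≤ 1` for every coordinate `i`, so that
`∑ j, ‖T x_j‖ ≤ ∑ i, w_i max_j |f_j(v_i)|`; by Jensen's inequality the `p`-th power of this is at
most `k · sup_{‖f‖ ≤ 1} ∑ i, w_i |f(v_i)|^p`.

For the uniform measure on the normalised cube `{±1}^n / √n` and `p = 2q`, Khinchin's inequality
bounds the supremum by `(2qe / n)^q`, and `q ≈ (log k) / 2` makes `k^{1/2q}` bounded. That measure
has `2^n` atoms, but its moments of order `2q` depend only on the mean of the tensors `ε^{⊗2q}`,
so Carathéodory's theorem gives a measure with at most `n^{2q} ≤ n^{1 + log k}` atoms and the same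
moments. The usual extra atom is not needed, because these tensors lie on an affine hyperplane:
every diagonal coordinate of `ε^{⊗2q}` equals `1`. When `log k < 1`, where `q = 0` would result,
the uniform measure on the standard basis suffices.
-/

section Caratheodory

lemma card_le_finrank_of_affineIndependent_of_eq_one {𝕜 E ι : Type*} [Field 𝕜] [AddCommGroup E]
    [Module 𝕜 E] [FiniteDimensional 𝕜 E] [Fintype ι] {z : ι → E} (hz : AffineIndependent 𝕜 z)
    (l : E →ₗ[𝕜] 𝕜) (hl : ∀ i, l (z i) = 1) :
    Fintype.card ι ≤ Module.finrank 𝕜 E := by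
  refine LinearIndependent.fintype_card_le_finrank (R := 𝕜) (b := z) ?_
  refine Fintype.linearIndependent_iff.mpr fun c hc i => ?_
  have hsum : ∑ i, c i = 0 := by simpa [hl] using congrArg l hc
  exact hz.eq_zero_of_sum_eq_zero hsum hc i (Finset.mem_univ i)

variable {𝕜 E ι κ : Type*} [Field 𝕜] [LinearOrder 𝕜] [IsStrictOrderedRing 𝕜] [AddCommGroup E]
  [Module 𝕜 E] [Fintype ι] [Fintype κ]

variable (E) in
lemma exists_mem_stdSimplex_sum_smul_comp_eq {w : ι → 𝕜} (hw : w ∈ stdSimplex 𝕜 ι)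
    (hcard : Fintype.card ι ≤ Fintype.card κ) :
    ∃ w' ∈ stdSimplex 𝕜 κ, ∃ σ : κ → ι, ∀ f : ι → E, ∑ j, w' j • f (σ j) = ∑ i, w i • f i := by
  classical
  obtain ⟨e⟩ := Function.Embedding.nonempty_of_card_le hcard
  have : Nonempty ι :=
    Finset.univ_nonempty_iff.mp (Finset.nonempty_of_sum_ne_zero (hw.2.trans_ne one_ne_zero))
  refine ⟨fun j => ∑ i with e i = j, w i, ⟨fun j => Finset.sum_nonneg fun i _ => hw.1 i, ?_⟩,
    Function.invFun e, fun f => ?_⟩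
  · exact (Finset.sum_fiberwise _ _ _).trans hw.2
  · rw [← Finset.sum_fiberwise Finset.univ e fun i => w i • f i]
    refine Finset.sum_congr rfl fun j _ => ?_
    rw [Finset.sum_smul]
    refine Finset.sum_congr rfl fun i hi => ?_
    rw [← (Finset.mem_filter.mp hi).2, Function.leftInverse_invFun e.injective]

lemma exists_mem_stdSimplex_sum_smul_eq [FiniteDimensional 𝕜 E] {Ω : Type*} {Φ : Ω → E} {x : E}
    (hx : x ∈ convexHull 𝕜 (Set.range Φ)) (l : E →ₗ[𝕜] 𝕜) (hl : ∀ ω, l (Φ ω) = 1)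
    (hcard : Module.finrank 𝕜 E ≤ Fintype.card κ) :
    ∃ w ∈ stdSimplex 𝕜 κ, ∃ σ : κ → Ω, ∑ j, w j • Φ (σ j) = x := by
  obtain ⟨ι, _, z, w, hz, hind, hpos, hsum, rfl⟩ := eq_pos_convex_span_of_mem_convexHull hx
  choose ω hω using fun i => hz ⟨i, rfl⟩
  have hι : Fintype.card ι ≤ Module.finrank 𝕜 E :=
    card_le_finrank_of_affineIndependent_of_eq_one hind l fun i => hω i ▸ hl (ω i)
  obtain ⟨w', hw', σ, hσ⟩ := exists_mem_stdSimplex_sum_smul_comp_eq E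
    ⟨fun i => (hpos i).le, hsum⟩ (hι.trans hcard)
  refine ⟨w', hw', ω ∘ σ, ?_⟩
  simp only [Function.comp_apply, hω, hσ]

lemma expect_mem_convexHull_range [Module ℚ≥0 E] [Nonempty ι] (Φ : ι → E) :
    𝔼 i, Φ i ∈ convexHull 𝕜 (Set.range Φ) := by
  have hmean : 𝔼 i, Φ i = ∑ i, (Fintype.card ι : 𝕜)⁻¹ • Φ i := by
    rw [Finset.expect_univ, ← NNRat.cast_smul_eq_nnqsmul 𝕜, ← Finset.smul_sum]
    simp
  rw [hmean]
  exact (convex_convexHull 𝕜 _).sum_mem (fun _ _ => by positivity) (by simp)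
    fun i _ => subset_convexHull 𝕜 _ ⟨i, rfl⟩

end Caratheodory

section Rademacher

open Finset

variable {ι : Type*} [Fintype ι] [DecidableEq ι]

lemma expect_exp_rademacher_sum (v : ι → ℝ) :
    𝔼 ε : ι → ℤˣ, Real.exp (∑ a, ε a * v a) = ∏ a, Real.cosh (v a) := by
  have hsum (x : ℝ) : ∑ s : ℤˣ, Real.exp (s * x) = 2 * Real.cosh x := by
    rw [Real.cosh_eq, UnitsInt.univ, sum_pair (by decide)]
    push_cast
    ring_nf
  have hprod : ∑ ε : ι → ℤˣ, Real.exp (∑ a, ε a * v a) = ∏ a, 2 * Real.cosh (v a) := by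
    simp only [Real.exp_sum, ← hsum, Fintype.prod_sum]
  rw [Fintype.expect_eq_sum_div_card, hprod, prod_mul_distrib]
  simp

lemma expect_cosh_rademacher_sum_le (v : ι → ℝ) :
    𝔼 ε : ι → ℤˣ, Real.cosh (∑ a, ε a * v a) ≤ Real.exp ((∑ a, v a ^ 2) / 2) := by
  have hcosh : 𝔼 ε : ι → ℤˣ, Real.cosh (∑ a, ε a * v a) = ∏ a, Real.cosh (v a) := by
    have hneg := expect_exp_rademacher_sum fun a => -v a
    simp only [mul_neg, sum_neg_distrib, Real.cosh_neg] at hneg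
    simp only [Real.cosh_eq (∑ _, _), ← expect_div, expect_add_distrib, hneg,
      expect_exp_rademacher_sum]
    ring
  calc 𝔼 ε : ι → ℤˣ, Real.cosh (∑ a, ε a * v a) = ∏ a, Real.cosh (v a) := hcosh
    _ ≤ ∏ a, Real.exp (v a ^ 2 / 2) :=
      prod_le_prod (fun a _ => (Real.cosh_pos _).le) fun a _ => Real.cosh_le_exp_half_sq _
    _ = Real.exp ((∑ a, v a ^ 2) / 2) := by rw [← Real.exp_sum, sum_div]

lemma pow_two_mul_le_factorial_mul_cosh (x : ℝ) (q : ℕ) :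
    x ^ (2 * q) ≤ (2 * q).factorial * Real.cosh x := by
  have hterm := le_hasSum (Real.hasSum_cosh x) q fun j _ =>
    div_nonneg ((even_two_mul j).pow_nonneg x) (Nat.cast_nonneg _)
  rwa [div_le_iff₀' (by positivity)] at hterm

lemma expect_rademacher_sum_pow_le (u : ι → ℝ) (q : ℕ) :
    𝔼 ε : ι → ℤˣ, (∑ a, ε a * u a) ^ (2 * q) ≤ (2 * q * Real.exp 1 * ∑ a, u a ^ 2) ^ q := by
  obtain rfl | hq := eq_or_ne q 0
  · simp
  obtain hs | hs := (sum_nonneg fun a _ => sq_nonneg (u a) : 0 ≤ ∑ a, u a ^ 2).eq_or_lt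
  · have hu : ∀ a, u a = 0 := by
      simpa [sum_eq_zero_iff_of_nonneg, sq_nonneg] using hs.symm
    simp [hu, hq]
  set s := ∑ a, u a ^ 2
  -- The parameter `t = √(2q / s)` optimises `(2q)! t⁻²ᵠ exp (t² s / 2)`.
  set t := Real.sqrt (2 * q / s)
  have ht : t ^ 2 = 2 * q / s := Real.sq_sqrt (by positivity)
  have hexp : (∑ a, (t * u a) ^ 2) / 2 = q := by
    simp only [mul_pow, ← mul_sum, ht]
    field_simp
    rfl
  have hscaled : t ^ (2 * q) * 𝔼 ε : ι → ℤˣ, (∑ a, ε a * u a) ^ (2 * q)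
      ≤ (2 * q) ^ (2 * q) * Real.exp q :=
    calc t ^ (2 * q) * 𝔼 ε : ι → ℤˣ, (∑ a, ε a * u a) ^ (2 * q)
      _ = 𝔼 ε : ι → ℤˣ, (∑ a, ε a * (t * u a)) ^ (2 * q) := by
        simp only [mul_expect, ← mul_pow, mul_sum, mul_left_comm]
      _ ≤ 𝔼 ε : ι → ℤˣ, (2 * q).factorial * Real.cosh (∑ a, ε a * (t * u a)) :=
        expect_le_expect fun ε _ => pow_two_mul_le_factorial_mul_cosh _ q
      _ ≤ (2 * q).factorial * Real.exp q := by
        rw [← mul_expect, ← hexp]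
        gcongr
        exact expect_cosh_rademacher_sum_le _
      _ ≤ (2 * q) ^ (2 * q) * Real.exp q := by
        gcongr
        exact_mod_cast Nat.factorial_le_pow (2 * q)
  refine le_of_mul_le_mul_left (hscaled.trans_eq ?_) (by positivity : 0 < t ^ (2 * q))
  rw [pow_mul, pow_mul, ht, ← mul_pow, ← Real.exp_one_pow, ← mul_pow]
  congr 1
  field_simp

lemma exists_rademacher_cubature [Nonempty ι] {κ : Type*} [Fintype κ] {q : ℕ}
    (hcard : Fintype.card ι ^ (2 * q) ≤ Fintype.card κ) :
    ∃ w ∈ stdSimplex ℝ κ, ∃ ε : κ → ι → ℤˣ, ∀ u : ι → ℝ,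
      ∑ j, w j * (∑ a, ε j a * u a) ^ (2 * q) = 𝔼 η : ι → ℤˣ, (∑ a, η a * u a) ^ (2 * q) := by
  let Φ (ε : ι → ℤˣ) (f : Fin (2 * q) → ι) : ℝ := ∏ t, ε (f t)
  have hΦ (ε : ι → ℤˣ) (u : ι → ℝ) :
      (∑ a, ε a * u a) ^ (2 * q) = ∑ f, Φ ε f * ∏ t, u (f t) := by
    simp only [Fintype.sum_pow, prod_mul_distrib, Φ]
  obtain ⟨a₀⟩ := ‹Nonempty ι›
  have hdiag (ε : ι → ℤˣ) : Φ ε (fun _ => a₀) = 1 := by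
    obtain h | h := Int.units_eq_one_or (ε a₀) <;> simp [Φ, h]
  obtain ⟨w, hw, ε, hε⟩ := exists_mem_stdSimplex_sum_smul_eq (κ := κ)
    (expect_mem_convexHull_range (𝕜 := ℝ) Φ) (LinearMap.proj fun _ => a₀) hdiag
    (by simpa using hcard)
  refine ⟨w, hw, ε, fun u => ?_⟩
  simp only [hΦ, mul_sum, ← mul_assoc]
  rw [sum_comm, expect_sum_comm]
  simp only [← sum_mul, ← expect_mul]
  refine sum_congr rfl fun f _ => ?_
  have hf : ∑ j, w j * Φ (ε j) f = 𝔼 η, Φ η f := by simpa using congrFun hε f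
  rw [hf]

end Rademacher


/-- The weak `p`-th moment `sup_{‖f‖ ≤ 1} ∑ i, w i * |f (v i)| ^ p` of the discrete measure with
mass `w i` at `v i` is at most `B`. -/
def WeakMomentLE {E ι : Type*} [NormedAddCommGroup E] [NormedSpace ℝ E] [Fintype ι] (p : ℕ)
    (w : ι → ℝ) (v : ι → E) (B : ℝ) : Prop :=
  ∀ f : E →L[ℝ] ℝ, ‖f‖ ≤ 1 → ∑ i, w i * |f (v i)| ^ p ≤ B

section EuclideanSpace

open Finset

variable {ι κ : Type*} [Fintype ι] [Fintype κ]

lemma sum_sq_dual_single [DecidableEq ι] (f : EuclideanSpace ℝ ι →L[ℝ] ℝ) :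
    ∑ a, f (EuclideanSpace.single a 1) ^ 2 = ‖f‖ ^ 2 := by
  obtain ⟨y, rfl⟩ := (InnerProductSpace.toDual ℝ (EuclideanSpace ℝ ι)).surjective f
  simp [EuclideanSpace.real_norm_sq_eq, EuclideanSpace.inner_single_right]

/-- The unit vector `(ε a / √d)_a` of `ℓ_2^d`, where `d` is the number of signs `ε a`. -/
def signVector (ε : ι → ℤˣ) : EuclideanSpace ℝ ι :=
  WithLp.toLp 2 fun a => (ε a : ℝ) / √(Fintype.card ι)

lemma norm_signVector [Nonempty ι] (ε : ι → ℤˣ) : ‖signVector ε‖ = 1 := by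
  have hsq (s : ℤˣ) : (s : ℝ) ^ 2 = 1 := by
    rw [← Int.cast_pow, ← Units.val_pow_eq_pow_val, Int.units_sq, Units.val_one, Int.cast_one]
  simp [EuclideanSpace.norm_eq, signVector, div_pow, hsq]

lemma dual_signVector [DecidableEq ι] (f : EuclideanSpace ℝ ι →L[ℝ] ℝ) (ε : ι → ℤˣ) :
    f (signVector ε) = (∑ a, ε a * f (EuclideanSpace.single a 1)) / √(Fintype.card ι) := by
  have hsum : signVector ε = ∑ a, ((ε a : ℝ) / √(Fintype.card ι)) • EuclideanSpace.single a 1 := by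
    ext b
    simp [signVector, Pi.single_apply]
  simp only [hsum, map_sum, map_smul, smul_eq_mul, sum_div, div_mul_eq_mul_div]

lemma exists_signVector_weakMomentLE [Nonempty ι] {q : ℕ}
    (hcard : Fintype.card ι ^ (2 * q) ≤ Fintype.card κ) :
    ∃ w ∈ stdSimplex ℝ κ, ∃ ε : κ → ι → ℤˣ,
      WeakMomentLE (2 * q) w (fun j => signVector (ε j))
        ((2 * q * Real.exp 1 / Fintype.card ι) ^ q) := by
  classical
  obtain ⟨w, hw, ε, hε⟩ := exists_rademacher_cubature hcard
  refine ⟨w, hw, ε, fun f hf => ?_⟩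
  let u (a : ι) : ℝ := f (EuclideanSpace.single a 1)
  have hu : ∑ a, u a ^ 2 ≤ 1 := (sum_sq_dual_single f).trans_le (pow_le_one₀ (norm_nonneg f) hf)
  calc ∑ j, w j * |f (signVector (ε j))| ^ (2 * q)
    _ = (∑ j, w j * (∑ a, ε j a * u a) ^ (2 * q)) / Fintype.card ι ^ q := by
      have hpow (ε : ι → ℤˣ) : |f (signVector ε)| ^ (2 * q)
          = (∑ a, ε a * u a) ^ (2 * q) / Fintype.card ι ^ q := by
        rw [(even_two_mul q).pow_abs, dual_signVector, div_pow, pow_mul √_,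
          Real.sq_sqrt (Nat.cast_nonneg _)]
      simp only [hpow, sum_div, mul_div_assoc]
    _ ≤ (2 * q * Real.exp 1 * ∑ a, u a ^ 2) ^ q / Fintype.card ι ^ q := by
      rw [hε]
      gcongr
      exact expect_rademacher_sum_pow_le u q
    _ ≤ (2 * q * Real.exp 1 * 1) ^ q / Fintype.card ι ^ q := by gcongr
    _ = (2 * q * Real.exp 1 / Fintype.card ι) ^ q := by rw [mul_one, div_pow]

lemma exists_single_weakMomentLE [DecidableEq ι] [Nonempty ι]
    (hcard : Fintype.card ι ≤ Fintype.card κ) :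
    ∃ w ∈ stdSimplex ℝ κ, ∃ σ : κ → ι,
      WeakMomentLE 2 w (fun j => EuclideanSpace.single (σ j) (1 : ℝ)) (1 / Fintype.card ι) := by
  obtain ⟨w, hw, σ, hσ⟩ := exists_mem_stdSimplex_sum_smul_comp_eq ℝ
    (stdSimplex.barycenter (𝕜 := ℝ) (X := ι)).2 hcard
  refine ⟨w, hw, σ, fun f hf => ?_⟩
  calc ∑ j, w j * |f (EuclideanSpace.single (σ j) 1)| ^ 2
    _ = ∑ a, (Fintype.card ι : ℝ)⁻¹ * |f (EuclideanSpace.single a 1)| ^ 2 :=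
      hσ fun a => |f (EuclideanSpace.single a 1)| ^ 2
    _ = ‖f‖ ^ 2 / Fintype.card ι := by
      simp only [sq_abs, ← mul_sum, sum_sq_dual_single]
      rw [inv_mul_eq_div]
    _ ≤ 1 / Fintype.card ι := by
      gcongr
      exact pow_le_one₀ (norm_nonneg f) hf

end EuclideanSpace

section SummingNorm

open Finset

variable {X Y : Type*} [NormedAddCommGroup X] [NormedSpace ℝ X]
  [NormedAddCommGroup Y] [NormedSpace ℝ Y] {ι κ : Type*} [Fintype ι] [Fintype κ]

lemma eSum_one_ofReal {f : ι → ℝ} (hf : ∀ i, 0 ≤ f i) :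
    eSum 1 (fun i => ENNReal.ofReal (f i)) = ENNReal.ofReal (∑ i, f i) := by
  simp [eSum, ENNReal.ofReal_sum_of_nonneg fun i _ => hf i]

lemma weakLq_one_le_one_iff {k : ℕ} {x : Fin k → X} :
    weakLq 1 x ≤ 1 ↔ ∀ f : X →L[ℝ] ℝ, ‖f‖ ≤ 1 → ∑ j, |f (x j)| ≤ 1 := by
  simp [weakLq, eSum_one_ofReal]

lemma piN_one_le_ofReal_iff {k : ℕ} {T : X →L[ℝ] Y} {C : ℝ} (hC : 0 ≤ C) :
    piN 1 1 k T ≤ ENNReal.ofReal C ↔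
      ∀ x : Fin k → X, weakLq 1 x ≤ 1 → ∑ j, ‖T (x j)‖ ≤ C := by
  simp only [piN, eSum_one_ofReal fun _ => norm_nonneg _, iSup_le_iff, Subtype.forall,
    ENNReal.ofReal_le_ofReal_iff hC]

lemma sum_abs_coord_le_one {k : ℕ} {x : Fin k → PiLp ∞ (fun _ : ι => ℝ)} (hx : weakLq 1 x ≤ 1)
    (i : ι) : ∑ j, |x j i| ≤ 1 := by
  refine weakLq_one_le_one_iff.mp hx (PiLp.proj ∞ (fun _ : ι => ℝ) i) ?_
  refine ContinuousLinearMap.opNorm_le_bound _ zero_le_one fun y => ?_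
  simpa using PiLp.norm_apply_le y i

lemma sum_abs_dual_single_le_norm [DecidableEq ι] (f : PiLp ∞ (fun _ : ι => ℝ) →L[ℝ] ℝ) :
    ∑ i, |f (PiLp.single ∞ i 1)| ≤ ‖f‖ := by
  let s (i : ι) : ℝ := SignType.sign (f (PiLp.single ∞ i 1))
  have hs : ‖(WithLp.toLp ∞ s : PiLp ∞ fun _ : ι => ℝ)‖ ≤ 1 := by
    rw [PiLp.norm_toLp, pi_norm_le_iff_of_nonneg zero_le_one]
    intro i
    simp only [s]
    cases SignType.sign (f (PiLp.single ∞ i 1)) <;> simp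
  have hdecomp : (WithLp.toLp ∞ s : PiLp ∞ fun _ : ι => ℝ) = ∑ i, s i • PiLp.single ∞ i 1 := by
    ext b
    simp [Pi.single_apply]
  calc ∑ i, |f (PiLp.single ∞ i 1)| = f (WithLp.toLp ∞ s) := by
        simp [hdecomp, s]
    _ ≤ ‖f‖ * ‖(WithLp.toLp ∞ s : PiLp ∞ fun _ : ι => ℝ)‖ := (le_abs_self _).trans (f.le_opNorm _)
    _ ≤ ‖f‖ := mul_le_of_le_one_right (norm_nonneg f) hs

lemma ofReal_sum_norm_single_le_piPQ {m : ℕ} (T : PiLp ∞ (fun _ : Fin m => ℝ) →L[ℝ] Y) :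
    ENNReal.ofReal (∑ i, ‖T (PiLp.single ∞ i 1)‖) ≤ piPQ 1 1 T := by
  have hweak : weakLq 1 (fun i : Fin m => (PiLp.single ∞ i 1 : PiLp ∞ fun _ : Fin m => ℝ)) ≤ 1 :=
    weakLq_one_le_one_iff.mpr fun f hf => (sum_abs_dual_single_le_norm f).trans hf
  calc ENNReal.ofReal (∑ i, ‖T (PiLp.single ∞ i 1)‖)
    _ = eSum 1 fun i => ENNReal.ofReal ‖T (PiLp.single ∞ i 1)‖ :=
      (eSum_one_ofReal fun _ => norm_nonneg _).symm
    _ ≤ piN 1 1 m T :=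
      le_iSup (fun x : {x : Fin m → PiLp ∞ (fun _ : Fin m => ℝ) // weakLq 1 x ≤ 1} =>
        eSum 1 fun i => ENNReal.ofReal ‖T (x.1 i)‖) ⟨_, hweak⟩
    _ ≤ piPQ 1 1 T := le_iSup (fun k => piN 1 1 k T) m

lemma sum_mul_pow_le_sum_pow {p : ℕ} (hp : p ≠ 0) {a b : κ → ℝ} (ha : ∀ j, 0 ≤ a j)
    (hb : ∀ j, 0 ≤ b j) (ha1 : ∑ j, a j ≤ 1) :
    (∑ j, a j * b j) ^ p ≤ ∑ j, b j ^ p := by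
  obtain _ | _ := isEmpty_or_nonempty κ
  · simp [hp]
  obtain ⟨j₀, hj₀⟩ := Finite.exists_max b
  have hmax : ∑ j, a j * b j ≤ b j₀ :=
    calc ∑ j, a j * b j ≤ ∑ j, a j * b j₀ := by gcongr with j; exacts [ha j, hj₀ j]
      _ = (∑ j, a j) * b j₀ := by rw [sum_mul]
      _ ≤ b j₀ := mul_le_of_le_one_left (hb j₀) ha1
  calc (∑ j, a j * b j) ^ p ≤ b j₀ ^ p :=
        pow_le_pow_left₀ (sum_nonneg fun j _ => mul_nonneg (ha j) (hb j)) hmax p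
    _ ≤ ∑ j, b j ^ p :=
        single_le_sum (f := fun j => b j ^ p) (fun j _ => pow_nonneg (hb j) p) (mem_univ j₀)

/-- The operator `x ↦ ∑ i, (w i * x i) • v i` from `ℓ_∞`, that is, the composition of a diagonal
operator `ℓ_∞ → ℓ_1` with the map sending the `i`-th basis vector to `v i`. -/
def diagonalSynthesis (w : ι → ℝ) (v : ι → Y) : PiLp ∞ (fun _ : ι => ℝ) →L[ℝ] Y :=
  ∑ i, (PiLp.proj ∞ (fun _ : ι => ℝ) i).smulRight (w i • v i)

lemma diagonalSynthesis_apply (w : ι → ℝ) (v : ι → Y) (x : PiLp ∞ fun _ : ι => ℝ) :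
    diagonalSynthesis w v x = ∑ i, (w i * x i) • v i := by
  simp [diagonalSynthesis, smul_smul, mul_comm]

lemma diagonalSynthesis_single [DecidableEq ι] (w : ι → ℝ) (v : ι → Y) (i : ι) :
    diagonalSynthesis w v (PiLp.single ∞ i 1) = w i • v i := by
  simp [diagonalSynthesis_apply]

lemma one_le_piPQ_diagonalSynthesis {m : ℕ} {w : Fin m → ℝ} (hw : w ∈ stdSimplex ℝ (Fin m))
    {v : Fin m → Y} (hv : ∀ i, ‖v i‖ = 1) : 1 ≤ piPQ 1 1 (diagonalSynthesis w v) := by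
  have hsum : ∑ i, ‖diagonalSynthesis w v (PiLp.single ∞ i 1)‖ = 1 := by
    simp only [diagonalSynthesis_single, norm_smul, hv, mul_one, Real.norm_of_nonneg (hw.1 _), hw.2]
  simpa [hsum] using ofReal_sum_norm_single_le_piPQ (diagonalSynthesis w v)

lemma WeakMomentLE.sum_norm_diagonalSynthesis_pow_le {k p : ℕ} {w : ι → ℝ} {v : ι → Y} {B : ℝ}
    (hmom : WeakMomentLE p w v B) (hp : p ≠ 0) (hw : w ∈ stdSimplex ℝ ι)
    {x : Fin k → PiLp ∞ (fun _ : ι => ℝ)} (hx : weakLq 1 x ≤ 1) :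
    (∑ j, ‖diagonalSynthesis w v (x j)‖) ^ p ≤ k * B := by
  choose f hf hfx using fun j => exists_dual_vector'' ℝ (diagonalSynthesis w v (x j))
  have hnorm (j : Fin k) :
      ‖diagonalSynthesis w v (x j)‖ ≤ ∑ i, w i * (|x j i| * |f j (v i)|) := by
    calc ‖diagonalSynthesis w v (x j)‖ = ∑ i, w i * (x j i * f j (v i)) := by
          have hj := hfx j
          simp only [diagonalSynthesis_apply, map_sum, map_smul, smul_eq_mul] at hj
          simp only [diagonalSynthesis_apply, ← mul_assoc]
          exact hj.symm
      _ ≤ ∑ i, w i * (|x j i| * |f j (v i)|) := by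
          refine sum_le_sum fun i _ => mul_le_mul_of_nonneg_left ?_ (hw.1 i)
          exact (le_abs_self _).trans_eq (abs_mul _ _)
  calc (∑ j, ‖diagonalSynthesis w v (x j)‖) ^ p
    _ ≤ (∑ i, w i * ∑ j, |x j i| * |f j (v i)|) ^ p := by
      gcongr
      refine (sum_le_sum fun j _ => hnorm j).trans_eq ?_
      rw [sum_comm]
      simp only [mul_sum]
    _ ≤ ∑ i, w i * (∑ j, |x j i| * |f j (v i)|) ^ p :=
      Real.pow_arith_mean_le_arith_mean_pow _ _ _ (fun i _ => hw.1 i) hw.2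
        (fun i _ => by positivity) p
    _ ≤ ∑ i, w i * ∑ j, |f j (v i)| ^ p := by
      gcongr with i
      · exact hw.1 i
      · exact sum_mul_pow_le_sum_pow hp (fun j => abs_nonneg _) (fun j => abs_nonneg _)
          (sum_abs_coord_le_one hx i)
    _ = ∑ j, ∑ i, w i * |f j (v i)| ^ p := by
      simp only [mul_sum]
      rw [sum_comm]
    _ ≤ ∑ _j : Fin k, B := sum_le_sum fun j _ => hmom (f j) (hf j)
    _ = k * B := by simp

lemma WeakMomentLE.piN_diagonalSynthesis_le {k p : ℕ} {w : ι → ℝ} {v : ι → Y} {B C : ℝ}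
    (hmom : WeakMomentLE p w v B) (hp : p ≠ 0) (hw : w ∈ stdSimplex ℝ ι) (hC : 0 ≤ C)
    (hBC : k * B ≤ C ^ p) : piN 1 1 k (diagonalSynthesis w v) ≤ ENNReal.ofReal C :=
  (piN_one_le_ofReal_iff hC).mpr fun _ hx =>
    le_of_pow_le_pow_left₀ hp hC ((hmom.sum_norm_diagonalSynthesis_pow_le hp hw hx).trans hBC)

end SummingNorm

lemma pow_le_floor_rpow {n d : ℕ} {s : ℝ} (hn : n ≠ 0) (hd : d ≤ s) :
    n ^ d ≤ ⌊(n : ℝ) ^ s⌋₊ := by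
  refine Nat.le_floor ?_
  rw [Nat.cast_pow, ← Real.rpow_natCast]
  exact Real.rpow_le_rpow_of_exponent_le (by exact_mod_cast Nat.one_le_iff_ne_zero.mpr hn) hd

lemma exp_mul_sqrt_pow_two_mul {x : ℝ} (hx : 0 ≤ x) (q : ℕ) :
    (Real.exp (5 / 2) * √x) ^ (2 * q) = (Real.exp 5 * x) ^ q := by
  rw [pow_mul, mul_pow, Real.sq_sqrt hx, ← Real.exp_nat_mul]
  norm_num

lemma exists_weakMomentLE_of_log_lt_one {n k : ℕ} (hn : 0 < n) (hlog : Real.log k < 1) :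
    ∃ w ∈ stdSimplex ℝ (Fin ⌊(n : ℝ) ^ (1 + Real.log k)⌋₊),
      ∃ v : Fin ⌊(n : ℝ) ^ (1 + Real.log k)⌋₊ → EuclideanSpace ℝ (Fin n), (∀ i, ‖v i‖ = 1) ∧
        ∃ B, WeakMomentLE 2 w v B ∧ k * B ≤ Real.exp 5 * ((1 + Real.log k) / n) := by
  have : Nonempty (Fin n) := ⟨⟨0, hn⟩⟩
  have hlog0 : 0 ≤ Real.log k := Real.log_natCast_nonneg k
  have hcard : n ^ 1 ≤ ⌊(n : ℝ) ^ (1 + Real.log k)⌋₊ :=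
    pow_le_floor_rpow hn.ne' (by push_cast; linarith)
  obtain ⟨w, hw, σ, hmom⟩ := exists_single_weakMomentLE (ι := Fin n)
    (κ := Fin ⌊(n : ℝ) ^ (1 + Real.log k)⌋₊) (by simpa using hcard)
  have hk5 : (k : ℝ) ≤ Real.exp 5 :=
    (Real.le_exp_log k).trans (Real.exp_le_exp.mpr (by linarith))
  refine ⟨w, hw, _, fun i => by simp, _, hmom, ?_⟩
  rw [Fintype.card_fin]
  gcongr
  linarith

lemma exists_weakMomentLE_of_one_le_log {n k : ℕ} (hn : 0 < n) (hlog : 1 ≤ Real.log k) :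
    ∃ q ≠ 0, ∃ w ∈ stdSimplex ℝ (Fin ⌊(n : ℝ) ^ (1 + Real.log k)⌋₊),
      ∃ v : Fin ⌊(n : ℝ) ^ (1 + Real.log k)⌋₊ → EuclideanSpace ℝ (Fin n), (∀ i, ‖v i‖ = 1) ∧
        ∃ B, WeakMomentLE (2 * q) w v B ∧ k * B ≤ (Real.exp 5 * ((1 + Real.log k) / n)) ^ q := by
  have : Nonempty (Fin n) := ⟨⟨0, hn⟩⟩
  obtain ⟨q, hq, hqlog, hlogq⟩ :
      ∃ q : ℕ, 1 ≤ (q : ℝ) ∧ 2 * q ≤ 1 + Real.log k ∧ Real.log k ≤ 4 * q := by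
    have hfloor : 1 ≤ (⌊(1 + Real.log k) / 2⌋₊ : ℝ) :=
      Nat.one_le_cast.mpr (Nat.le_floor (by push_cast; linarith))
    have hle := Nat.floor_le (by linarith : 0 ≤ (1 + Real.log k) / 2)
    have hlt := Nat.lt_floor_add_one ((1 + Real.log k) / 2)
    exact ⟨_, hfloor, by linarith, by linarith⟩
  have hcard : n ^ (2 * q) ≤ ⌊(n : ℝ) ^ (1 + Real.log k)⌋₊ :=
    pow_le_floor_rpow hn.ne' (by exact_mod_cast hqlog)
  obtain ⟨w, hw, ε, hmom⟩ := exists_signVector_weakMomentLE (ι := Fin n)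
    (κ := Fin ⌊(n : ℝ) ^ (1 + Real.log k)⌋₊) (q := q) (by simpa using hcard)
  have hkq : (k : ℝ) ≤ Real.exp 4 ^ q := by
    rw [← Real.exp_nat_mul, mul_comm]
    exact (Real.le_exp_log k).trans (Real.exp_le_exp.mpr hlogq)
  refine ⟨q, by rintro rfl; norm_num at hq, w, hw, _, fun i => norm_signVector (ε i), _, hmom, ?_⟩
  calc (k : ℝ) * (2 * q * Real.exp 1 / Fintype.card (Fin n)) ^ q
    _ ≤ Real.exp 4 ^ q * ((1 + Real.log k) * Real.exp 1 / n) ^ q := by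
      rw [Fintype.card_fin]
      gcongr
    _ = (Real.exp 5 * ((1 + Real.log k) / n)) ^ q := by
      rw [← mul_pow, show (5 : ℝ) = 4 + 1 by norm_num, Real.exp_add]
      ring

lemma exists_weakMomentLE {n : ℕ} (hn : 0 < n) (k : ℕ) :
    ∃ p ≠ 0, ∃ w ∈ stdSimplex ℝ (Fin ⌊(n : ℝ) ^ (1 + Real.log k)⌋₊),
      ∃ v : Fin ⌊(n : ℝ) ^ (1 + Real.log k)⌋₊ → EuclideanSpace ℝ (Fin n), (∀ i, ‖v i‖ = 1) ∧
        ∃ B, WeakMomentLE p w v B ∧ k * B ≤ (Real.exp (5 / 2) * √((1 + Real.log k) / n)) ^ p := by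
  have hx : 0 ≤ (1 + Real.log k) / n := by
    have := Real.log_natCast_nonneg k
    positivity
  rcases lt_or_ge (Real.log k) 1 with hlog | hlog
  · obtain ⟨w, hw, v, hv, B, hmom, hB⟩ := exists_weakMomentLE_of_log_lt_one hn hlog
    have hpow := exp_mul_sqrt_pow_two_mul hx 1
    rw [mul_one, pow_one] at hpow
    exact ⟨2, two_ne_zero, w, hw, v, hv, B, hmom, hB.trans_eq hpow.symm⟩
  · obtain ⟨q, hq, w, hw, v, hv, B, hmom, hB⟩ := exists_weakMomentLE_of_one_le_log hn hlog
    exact ⟨2 * q, by positivity, w, hw, v, hv, B, hmom,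
      hB.trans_eq (exp_mul_sqrt_pow_two_mul hx q).symm⟩

/-- there is an absolute constant `c₀` such that for all
`n, k ≥ 1` there is an operator `T : ℓ_∞^{⌊n^{1+ln k}⌋} → ℓ_2^n` with
`π_1(T) > 0` and `π_1^k(T) ≤ c₀ √((1 + ln k)/n) π_1(T)`. -/
theorem statement19 :
    ∃ c₀ : ℝ, 0 < c₀ ∧
      ∀ (n k : ℕ), 0 < n → 0 < k →
        ∃ T : PiLp ∞ (fun _ : Fin ⌊(n : ℝ) ^ (1 + Real.log k)⌋₊ => ℝ) →L[ℝ]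
            EuclideanSpace ℝ (Fin n),
          0 < piPQ 1 1 T ∧
          piN 1 1 k T ≤
            ENNReal.ofReal (c₀ * Real.sqrt ((1 + Real.log k) / n)) * piPQ 1 1 T := by
  refine ⟨Real.exp (5 / 2), Real.exp_pos _, fun n k hn _ => ?_⟩
  obtain ⟨p, hp, w, hw, v, hv, B, hmom, hB⟩ := exists_weakMomentLE hn k
  have hone : 1 ≤ piPQ 1 1 (diagonalSynthesis w v) := one_le_piPQ_diagonalSynthesis hw hv
  refine ⟨diagonalSynthesis w v, zero_lt_one.trans_le hone, ?_⟩
  calc piN 1 1 k (diagonalSynthesis w v)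
    _ ≤ ENNReal.ofReal (Real.exp (5 / 2) * √((1 + Real.log k) / n)) :=
      hmom.piN_diagonalSynthesis_le hp hw (by positivity) hB
    _ ≤ _ := le_mul_of_one_le_right zero_le hone

end
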